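/- arXiv:1912.11614 — 2 statements merged into one kernel-verified Lean document; each statement's English description precedes it below -/
import Mathlib

section
/- Let n, m be integers with n > m ≥ 2 and n − m odd. Then ∫_0^∞ sin^n(x)/x^m dx = (−1)^{(m−n+1)/2}/(2^n (m−1)!) · ∑'_{l=0}^{n} (−1)^l · binom(n,l) · (n−2l)^{m−1} · ln|2l−n|, where ∑' means the term with 2l = n is omitted (equivalently, terms with 2l = n contribute 0 via the convention 0·ln 0 = 0), and the integral is a Lebesgue integral over (0,∞). -/
open MeasureTheory Real Finset

/-!
Multiplying `x ^ (-m) = Γ(m)⁻¹ ∫ t ^ (m - 1) e ^ (-xt) dt` by `f x` and integrating over `x` gives,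
by Fubini, a formula for the Mellin transform of `f` in terms of that of its Laplace transform.

Let `f x = ∑ c_i e ^ (-w_i x)` with `Re w_i ≥ 0`, whose Laplace transform is `∑ c_i / (t + w_i)`,
and suppose that the moments `∑ c_i w_i ^ q` vanish for `q ≤ k`. Then `f x = O(x ^ (k + 1))` at `0`,
so that `f x / x ^ (k + 1)` is integrable when `k ≥ 1`, and `t ^ k ∑ c_i / (t + w_i)` reduces to
`∑ c_i (-w_i) ^ k / (t + w_i)`, which has the primitive `∑ c_i (-w_i) ^ k log (t + w_i)`, vanishing
at infinity.

For `f = sin ^ n` the frequencies are `w_l = (n - 2 l) i`, the moments of order `q < n` are `n`-th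
finite differences of polynomials of degree `q`, and the parity of `n - m` makes the prefactor real,
so that only `Re (log w_l) = log |n - 2 l|` survives.
-/

open Asymptotics Complex Filter Topology

theorem sum_neg_one_pow_mul_choose_mul_eval_eq_zero {R : Type*} [CommRing R] {P : Polynomial R}
    {n : ℕ} (hP : P.natDegree < n) :
    ∑ l ∈ Finset.range (n + 1), (-1) ^ l * (n.choose l : R) * P.eval (l : R) = 0 := by
  have hdiff :
      ∑ l ∈ Finset.range (n + 1), (-1) ^ (n - l) * (n.choose l : R) * P.eval (l : R) = 0 := by
    have h := congrFun (Polynomial.fwdDiff_iter_eq_zero_of_degree_lt hP) 0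
    rw [fwdDiff_iter_eq_sum_shift] at h
    simpa [zsmul_eq_mul] using h
  rw [← mul_zero ((-1 : R) ^ n), ← hdiff, Finset.mul_sum]
  refine Finset.sum_congr rfl fun l hl ↦ ?_
  have hsign : (-1 : R) ^ n * (-1) ^ (n - l) = (-1) ^ l := by
    obtain ⟨p, rfl⟩ := Nat.exists_eq_add_of_le (Finset.mem_range_succ_iff.mp hl)
    rw [Nat.add_sub_cancel_left, pow_add, mul_assoc, ← mul_pow]
    simp
  rw [← hsign]
  ring

theorem pow_mul_sum_div_add {ι K : Type*} [Field K] {s : Finset ι} {c w : ι → K} {t : K} {k : ℕ}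
    (hc : ∀ q < k, ∑ i ∈ s, c i * w i ^ q = 0) (ht : ∀ i ∈ s, t + w i ≠ 0) :
    t ^ k * ∑ i ∈ s, c i / (t + w i) = ∑ i ∈ s, c i * (-w i) ^ k / (t + w i) := by
  have hgeom : ∀ i ∈ s, t ^ k * (c i / (t + w i)) - c i * (-w i) ^ k / (t + w i) =
      ∑ j ∈ Finset.range k, t ^ j * (-1) ^ (k - 1 - j) * (c i * w i ^ (k - 1 - j)) := fun i hi ↦ by
    have hfactor := (Commute.all t (-w i)).geom_sum₂_mul k
    rw [sub_neg_eq_add] at hfactor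
    calc t ^ k * (c i / (t + w i)) - c i * (-w i) ^ k / (t + w i)
        = c i * ((t ^ k - (-w i) ^ k) / (t + w i)) := by ring
      _ = c i * ∑ j ∈ Finset.range k, t ^ j * (-w i) ^ (k - 1 - j) := by
        rw [← hfactor, mul_div_cancel_right₀ _ (ht i hi)]
      _ = ∑ j ∈ Finset.range k, t ^ j * (-1) ^ (k - 1 - j) * (c i * w i ^ (k - 1 - j)) := by
        rw [Finset.mul_sum]
        refine Finset.sum_congr rfl fun j _ ↦ ?_
        rw [neg_pow (w i)]
        ring
  rw [← sub_eq_zero, Finset.mul_sum, ← Finset.sum_sub_distrib, Finset.sum_congr rfl hgeom,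
    Finset.sum_comm]
  refine Finset.sum_eq_zero fun j hj ↦ ?_
  rw [← Finset.mul_sum, hc _ (by have := Finset.mem_range.mp hj; omega), mul_zero]

section Laplace

variable {E : Type*} [NormedAddCommGroup E] [NormedSpace ℂ E] {f : ℝ → E} {s : ℂ}

/-- The one-sided Laplace transform `p ↦ ∫₀^∞ e^{-px} f(x) dx` of a function on the half-line. -/
noncomputable def laplaceTransform (f : ℝ → E) (p : ℂ) : E :=
  ∫ x in Set.Ioi (0 : ℝ), Complex.exp (-(p * x)) • f x

theorem integral_norm_cpow_mul_exp_neg_mul_Ioi (hs : 0 < s.re) {x : ℝ} (hx : 0 < x) :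
    ∫ t in Set.Ioi (0 : ℝ), ‖(t : ℂ) ^ (s - 1) * Complex.exp (-(x * t))‖ =
      Real.Gamma s.re * ‖(x : ℂ) ^ (-s)‖ := by
  have hnorm : ∀ t ∈ Set.Ioi (0 : ℝ), ‖(t : ℂ) ^ (s - 1) * Complex.exp (-(x * t))‖ =
      t ^ (s.re - 1) * Real.exp (-(x * t)) := fun t ht ↦ by
    simp [norm_cpow_eq_rpow_re_of_pos ht, Complex.norm_exp]
  rw [setIntegral_congr_fun measurableSet_Ioi hnorm, Real.integral_rpow_mul_exp_neg_mul_Ioi hs hx,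
    norm_cpow_eq_rpow_re_of_pos hx, neg_re, one_div, Real.inv_rpow hx.le, Real.rpow_neg hx.le,
    mul_comm]

theorem integrableOn_cpow_mul_exp_neg_mul_Ioi (hs : 0 < s.re) {x : ℝ} (hx : 0 < x) :
    IntegrableOn (fun t : ℝ ↦ (t : ℂ) ^ (s - 1) * Complex.exp (-(x * t))) (Set.Ioi 0) := by
  refine .of_integral_ne_zero ?_
  rw [Complex.integral_cpow_mul_exp_neg_mul_Ioi hs (by simpa using hx)]
  exact mul_ne_zero (by simp [cpow_eq_zero_iff, hx.ne']) (Complex.Gamma_ne_zero_of_re_pos hs)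

theorem aestronglyMeasurable_of_mellinConvergent (hf : MellinConvergent f s) :
    AEStronglyMeasurable f (volume.restrict (Set.Ioi 0)) := by
  have hpow : Measurable fun x : ℝ ↦ (x : ℂ) ^ (-(s - 1)) := by fun_prop
  refine (hpow.aestronglyMeasurable.smul hf.aestronglyMeasurable).congr ?_
  filter_upwards [ae_restrict_mem measurableSet_Ioi] with x hx
  have hx' : (x : ℂ) ≠ 0 := ofReal_ne_zero.mpr (ne_of_gt hx)
  simp [smul_smul, ← cpow_add _ _ hx']

theorem integrable_prod_cpow_mul_exp_smul (hs : 0 < s.re) (hf : MellinConvergent f (1 - s)) :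
    Integrable (Function.uncurry fun x t : ℝ ↦
        ((t : ℂ) ^ (s - 1) * Complex.exp (-(x * t))) • f x)
      ((volume.restrict (Set.Ioi 0)).prod (volume.restrict (Set.Ioi 0))) := by
  have hkernel : Measurable fun p : ℝ × ℝ ↦
      (p.2 : ℂ) ^ (s - 1) * Complex.exp (-(p.1 * p.2)) := by fun_prop
  refine (integrable_prod_iff (hkernel.aestronglyMeasurable.smul
    (aestronglyMeasurable_of_mellinConvergent hf).comp_fst)).mpr ⟨?_, ?_⟩
  · filter_upwards [ae_restrict_mem measurableSet_Ioi] with x hx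
    exact (integrableOn_cpow_mul_exp_neg_mul_Ioi hs hx).smul_const (f x)
  · refine (hf.norm.const_mul (Real.Gamma s.re)).congr ?_
    filter_upwards [ae_restrict_mem measurableSet_Ioi] with x hx
    simp only [Pi.smul_apply', norm_smul _ (f x)]
    rw [integral_mul_const, integral_norm_cpow_mul_exp_neg_mul_Ioi hs hx, sub_sub_cancel_left,
      mul_assoc]

theorem mellin_one_sub_natCast_add_one (g : ℝ → ℂ) (k : ℕ) :
    mellin g (1 - (k + 1)) = ∫ x in Set.Ioi (0 : ℝ), g x / (x : ℂ) ^ (k + 1) := by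
  refine setIntegral_congr_fun measurableSet_Ioi fun x _ ↦ ?_
  rw [sub_sub_cancel_left, cpow_neg, ← Nat.cast_add_one, cpow_natCast, smul_eq_mul,
    inv_mul_eq_div]

theorem cpow_smul_laplaceTransform (t : ℝ) :
    (t : ℂ) ^ (s - 1) • laplaceTransform f t =
      ∫ x in Set.Ioi (0 : ℝ), ((t : ℂ) ^ (s - 1) * Complex.exp (-(x * t))) • f x := by
  simp_rw [laplaceTransform, ← integral_smul, smul_smul, mul_comm (t : ℂ)]

theorem mellinConvergent_laplaceTransform (hs : 0 < s.re) (hf : MellinConvergent f (1 - s)) :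
    MellinConvergent (fun t : ℝ ↦ laplaceTransform f t) s := by
  simpa only [MellinConvergent, cpow_smul_laplaceTransform] using!
    (integrable_prod_cpow_mul_exp_smul hs hf).integral_prod_right

theorem mellin_laplaceTransform [CompleteSpace E] (hs : 0 < s.re)
    (hf : MellinConvergent f (1 - s)) :
    mellin (fun t : ℝ ↦ laplaceTransform f t) s = Complex.Gamma s • mellin f (1 - s) := by
  simp only [mellin, cpow_smul_laplaceTransform]
  rw [← integral_integral_swap (integrable_prod_cpow_mul_exp_smul hs hf), ← integral_smul]
  refine setIntegral_congr_fun measurableSet_Ioi fun x (hx : 0 < x) ↦ ?_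
  have hinv : (1 / x : ℂ) ^ s = (x : ℂ) ^ (-s) := by
    have harg : arg x ≠ π := by simpa [arg_ofReal_of_nonneg hx.le] using pi_ne_zero.symm
    rw [one_div, inv_cpow _ _ harg, cpow_neg]
  simp only [integral_smul_const, sub_sub_cancel_left, smul_smul]
  rw [Complex.integral_cpow_mul_exp_neg_mul_Ioi hs (by simpa using hx), hinv, mul_comm]

end Laplace

section LogIntegral

variable {ι : Type*} {s : Finset ι} {c w : ι → ℂ}

theorem tendsto_log_ofReal_add_sub_log_ofReal (w : ℂ) :
    Tendsto (fun t : ℝ ↦ Complex.log (t + w) - Real.log t) atTop (𝓝 0) := by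
  have hone : Tendsto (fun t : ℝ ↦ 1 + w * (t : ℂ)⁻¹) atTop (𝓝 1) := by
    have hinv : Tendsto (fun t : ℝ ↦ (t : ℂ)⁻¹) atTop (𝓝 0) := by
      simpa using tendsto_inv_atTop_zero.ofReal
    simpa using (hinv.const_mul w).const_add 1
  have hlog := hone.clog one_mem_slitPlane
  rw [Complex.log_one] at hlog
  refine hlog.congr' ?_
  filter_upwards [eventually_gt_atTop 0, hone.eventually_ne one_ne_zero] with t ht hne
  have hfactor : (t : ℂ) + w = t * (1 + w * (t : ℂ)⁻¹) := by
    field_simp [ofReal_ne_zero.mpr ht.ne']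
  rw [hfactor, log_ofReal_mul ht hne, add_sub_cancel_left]

theorem tendsto_sum_mul_log_ofReal_add (hc : ∑ i ∈ s, c i = 0) :
    Tendsto (fun t : ℝ ↦ ∑ i ∈ s, c i * Complex.log (t + w i)) atTop (𝓝 0) := by
  have hterm := tendsto_finsetSum s fun i _ ↦
    (tendsto_log_ofReal_add_sub_log_ofReal (w i)).const_mul (c i)
  simpa [mul_sub, Finset.sum_sub_distrib, ← Finset.sum_mul, hc] using hterm

theorem ofReal_add_mem_slitPlane {t : ℝ} (ht : 0 ≤ t) {z : ℂ} (hz : z ∈ slitPlane) :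
    (t : ℂ) + z ∈ slitPlane := by
  rw [mem_slitPlane_iff] at hz ⊢
  simpa using hz.imp_left fun h ↦ by positivity

theorem mem_slitPlane_of_re_nonneg {z : ℂ} (hz : 0 ≤ z.re) (hne : z ≠ 0) : z ∈ slitPlane := by
  rw [mem_slitPlane_iff, hz.lt_iff_ne]
  by_contra! hzero
  exact hne (Complex.ext hzero.1.symm hzero.2)

theorem integral_Ioi_sum_div_ofReal_add (hc : ∑ i ∈ s, c i = 0)
    (hw : ∀ i ∈ s, c i ≠ 0 → w i ∈ slitPlane)
    (hint : IntegrableOn (fun t : ℝ ↦ ∑ i ∈ s, c i / (t + w i)) (Set.Ioi 0)) :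
    ∫ t in Set.Ioi (0 : ℝ), ∑ i ∈ s, c i / (t + w i) = -∑ i ∈ s, c i * Complex.log (w i) := by
  have hderiv : ∀ t : ℝ, 0 ≤ t →
      HasDerivAt (fun t : ℝ ↦ ∑ i ∈ s, c i * Complex.log (t + w i))
        (∑ i ∈ s, c i / (t + w i)) t := by
    refine fun t ht ↦ HasDerivAt.fun_sum fun i hi ↦ ?_
    rcases eq_or_ne (c i) 0 with hzero | hne
    · simpa [hzero] using hasDerivAt_const t (0 : ℂ)
    · simpa [div_eq_mul_inv] using (((hasDerivAt_id t).ofReal_comp.add_const (w i)).clog_real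
        (ofReal_add_mem_slitPlane ht (hw i hi hne))).const_mul (c i)
  rw [integral_Ioi_of_hasDerivAt_of_tendsto (hderiv 0 le_rfl).continuousAt.continuousWithinAt
    (fun t ht ↦ hderiv t (le_of_lt ht)) hint (tendsto_sum_mul_log_ofReal_add hc)]
  simp

end LogIntegral

section ExpSum

variable {ι : Type*} {s : Finset ι} {c w : ι → ℂ} {k : ℕ}

/-- The exponential sum `x ↦ ∑ i ∈ s, c i * e^{-(w i) x}` on the real line. The sign of the exponent
puts the bounded sums on the half-line at frequencies in the closed right half-plane. -/
noncomputable def expSum (s : Finset ι) (c w : ι → ℂ) (x : ℝ) : ℂ :=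
  ∑ i ∈ s, c i * Complex.exp (-(w i * x))

theorem continuous_expSum : Continuous (expSum s c w) := by
  unfold expSum
  fun_prop

theorem expSum_isBigO_one_atTop (hw : ∀ i ∈ s, 0 ≤ (w i).re) :
    expSum s c w =O[atTop] (fun _ ↦ (1 : ℝ)) := by
  unfold expSum
  refine IsBigO.fun_sum fun i hi ↦ .of_bound ‖c i‖ ?_
  filter_upwards [eventually_ge_atTop 0] with x hx
  have hdecay : ‖Complex.exp (-(w i * x))‖ ≤ 1 := by
    rw [Complex.norm_exp, Real.exp_le_one_iff]
    simpa using mul_nonneg (hw i hi) hx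
  simpa using mul_le_mul_of_nonneg_left hdecay (norm_nonneg (c i))

theorem expSum_isBigO_pow_nhds_zero (hc : ∀ q < k, ∑ i ∈ s, c i * w i ^ q = 0) :
    expSum s c w =O[𝓝 0] (fun x : ℝ ↦ x ^ k) := by
  have htaylor : ∀ x : ℝ,
      ∑ i ∈ s, c i * ∑ q ∈ Finset.range k, (-(w i * x)) ^ q / q.factorial = 0 := by
    intro x
    simp_rw [Finset.mul_sum]
    rw [Finset.sum_comm]
    refine Finset.sum_eq_zero fun q hq ↦ ?_
    have hmoment := congrArg (· * ((-x : ℂ) ^ q / q.factorial)) (hc q (Finset.mem_range.mp hq))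
    simp only [Finset.sum_mul, zero_mul] at hmoment
    rw [← hmoment]
    refine Finset.sum_congr rfl fun i _ ↦ ?_
    rw [← mul_neg, mul_pow]
    ring
  have hremainder : expSum s c w = fun x : ℝ ↦ ∑ i ∈ s, c i *
      (Complex.exp (-(w i * x)) - ∑ q ∈ Finset.range k, (-(w i * x)) ^ q / q.factorial) := by
    funext x
    simp_rw [mul_sub, Finset.sum_sub_distrib, htaylor x, sub_zero, expSum]
  rw [hremainder]
  refine IsBigO.fun_sum fun i _ ↦ IsBigO.const_mul_left ?_ (c i)
  have hlim : Tendsto (fun x : ℝ ↦ -(w i * x)) (𝓝 0) (𝓝 0) :=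
    Continuous.tendsto' (by fun_prop) _ _ (by simp)
  refine ((Complex.exp_sub_sum_range_isBigO_pow k).comp_tendsto hlim).trans ?_
  refine IsBigO.of_bound (‖w i‖ ^ k) (Eventually.of_forall fun x ↦ ?_)
  simp [mul_pow]

theorem mellinConvergent_expSum {z : ℂ} (hw : ∀ i ∈ s, 0 ≤ (w i).re)
    (hc : ∀ q < k, ∑ i ∈ s, c i * w i ^ q = 0) (hz : -k < z.re) (hz' : z.re < 0) :
    MellinConvergent (expSum s c w) z := by
  refine mellinConvergent_of_isBigO_rpow (a := 0) (b := -k)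
    (continuous_expSum.locallyIntegrable.locallyIntegrableOn _) ?_ hz' ?_ hz
  · simpa using expSum_isBigO_one_atTop hw
  · simpa using (expSum_isBigO_pow_nhds_zero hc).mono nhdsWithin_le_nhds

theorem laplaceTransform_expSum (hw : ∀ i ∈ s, 0 ≤ (w i).re) {p : ℂ} (hp : 0 < p.re) :
    laplaceTransform (expSum s c w) p = ∑ i ∈ s, c i / (p + w i) := by
  have hre : ∀ i ∈ s, (-(p + w i)).re < 0 := fun i hi ↦ by
    have := hw i hi
    simp only [neg_re, add_re]
    linarith
  have hexp : ∀ x : ℝ, Complex.exp (-(p * x)) • expSum s c w x =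
      ∑ i ∈ s, c i * Complex.exp (-(p + w i) * x) := fun x ↦ by
    rw [expSum, Finset.smul_sum]
    refine Finset.sum_congr rfl fun i _ ↦ ?_
    rw [smul_eq_mul, mul_left_comm, ← Complex.exp_add]
    ring_nf
  simp_rw [laplaceTransform, hexp]
  rw [integral_finsetSum _ fun i hi ↦ (integrableOn_exp_mul_complex_Ioi (hre i hi) 0).const_mul _]
  refine Finset.sum_congr rfl fun i hi ↦ ?_
  rw [integral_const_mul, integral_exp_mul_complex_Ioi (hre i hi), ofReal_zero, mul_zero,
    Complex.exp_zero, neg_div_neg_eq, mul_one_div]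

theorem pow_mul_laplaceTransform_expSum (hw : ∀ i ∈ s, 0 ≤ (w i).re)
    (hc : ∀ q < k, ∑ i ∈ s, c i * w i ^ q = 0) {p : ℂ} (hp : 0 < p.re) :
    p ^ k * laplaceTransform (expSum s c w) p = ∑ i ∈ s, c i * (-w i) ^ k / (p + w i) := by
  have hne : ∀ i ∈ s, p + w i ≠ 0 := fun i hi hzero ↦ by
    have hre := congrArg re hzero
    simp only [add_re, zero_re] at hre
    linarith [hw i hi]
  rw [laplaceTransform_expSum hw hp, pow_mul_sum_div_add hc hne]

theorem integral_expSum_div_pow (hk : k ≠ 0) (hw : ∀ i ∈ s, 0 ≤ (w i).re)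
    (hc : ∀ q ≤ k, ∑ i ∈ s, c i * w i ^ q = 0) :
    ∫ x in Set.Ioi (0 : ℝ), expSum s c w x / (x : ℂ) ^ (k + 1) =
      -(∑ i ∈ s, c i * (-w i) ^ k * Complex.log (w i)) / k.factorial := by
  have hconv : MellinConvergent (expSum s c w) (1 - (k + 1)) :=
    mellinConvergent_expSum (k := k + 1) hw (fun q hq ↦ hc q (Nat.lt_succ_iff.mp hq))
      (by simp) (by simpa using Nat.pos_of_ne_zero hk)
  have hs : 0 < ((k : ℂ) + 1).re := by
    simp only [add_re, natCast_re, one_re]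
    positivity
  have hlaplace : ∀ t ∈ Set.Ioi (0 : ℝ),
      (t : ℂ) ^ ((k + 1 : ℂ) - 1) • laplaceTransform (expSum s c w) t =
        ∑ i ∈ s, c i * (-w i) ^ k / (t + w i) := fun t ht ↦ by
    rw [add_sub_cancel_right, cpow_natCast, smul_eq_mul,
      pow_mul_laplaceTransform_expSum hw (fun q hq ↦ hc q hq.le) (by simpa using ht)]
  have hslit : ∀ i ∈ s, c i * (-w i) ^ k ≠ 0 → w i ∈ slitPlane := fun i hi hne ↦
    mem_slitPlane_of_re_nonneg (hw i hi) fun hzero ↦ hne (by simp [hzero, hk])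
  have hmoment : ∑ i ∈ s, c i * (-w i) ^ k = 0 := by
    simp_rw [neg_pow (w _), mul_left_comm (c _)]
    rw [← Finset.mul_sum, hc k le_rfl, mul_zero]
  have hint := (mellinConvergent_laplaceTransform hs hconv).congr_fun hlaplace measurableSet_Ioi
  have hGamma := mellin_laplaceTransform hs hconv
  rw [mellin, setIntegral_congr_fun measurableSet_Ioi hlaplace,
    integral_Ioi_sum_div_ofReal_add hmoment hslit hint, Complex.Gamma_nat_eq_factorial,
    mellin_one_sub_natCast_add_one, smul_eq_mul] at hGamma
  rw [eq_div_iff (by exact_mod_cast k.factorial_ne_zero), hGamma, mul_comm]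

end ExpSum

section Sine

theorem ofReal_sin_pow_eq_expSum (n : ℕ) (x : ℝ) :
    ((Real.sin x ^ n : ℝ) : ℂ) = expSum (Finset.range (n + 1))
      (fun l ↦ (I / 2) ^ n * ((-1) ^ l * n.choose l)) (fun l ↦ (n - 2 * l) * I) x := by
  have hsin : Complex.sin x =
      I / 2 * (-Complex.exp (x * I) + Complex.exp (-x * I)) := by
    rw [Complex.sin]; ring
  rw [ofReal_pow, ofReal_sin, hsin, mul_pow, add_pow, expSum, Finset.mul_sum]
  refine Finset.sum_congr rfl fun l hl ↦ ?_
  have hexp : Complex.exp (x * I) ^ l * Complex.exp (-x * I) ^ (n - l) =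
      Complex.exp (-((n - 2 * l) * I * x)) := by
    rw [← Complex.exp_nat_mul, ← Complex.exp_nat_mul, ← Complex.exp_add,
      Nat.cast_sub (Finset.mem_range_succ_iff.mp hl)]
    ring_nf
  rw [neg_pow, ← hexp]
  ring

theorem sum_neg_one_pow_mul_choose_mul_sub_pow_eq_zero {R : Type*} [CommRing R] {n q : ℕ}
    (hq : q < n) :
    ∑ l ∈ Finset.range (n + 1), (-1) ^ l * (n.choose l : R) * ((n : R) - 2 * l) ^ q = 0 := by
  have hdeg : ((Polynomial.C (n : R) - Polynomial.C 2 * Polynomial.X) ^ q).natDegree < n :=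
    lt_of_le_of_lt (by compute_degree) hq
  simpa using sum_neg_one_pow_mul_choose_mul_eval_eq_zero hdeg

theorem ofReal_integral_sin_pow_div_pow {n k : ℕ} (hk : k ≠ 0) (hkn : k < n) :
    ((∫ x in Set.Ioi (0 : ℝ), Real.sin x ^ n / x ^ (k + 1) : ℝ) : ℂ) =
      -((I / 2) ^ n * (-I) ^ k / k.factorial) * ∑ l ∈ Finset.range (n + 1),
        (-1) ^ l * n.choose l * ((n : ℂ) - 2 * l) ^ k * Complex.log ((n - 2 * l) * I) := by
  have hmoment : ∀ q ≤ k, ∑ l ∈ Finset.range (n + 1),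
      (I / 2) ^ n * ((-1) ^ l * (n.choose l : ℂ)) * (((n : ℂ) - 2 * l) * I) ^ q = 0 := fun q hq ↦ by
    simp_rw [mul_pow _ I, ← mul_assoc, ← Finset.sum_mul, mul_assoc ((I / 2) ^ n), ← Finset.mul_sum,
      sum_neg_one_pow_mul_choose_mul_sub_pow_eq_zero (R := ℂ) (hq.trans_lt hkn)]
    simp
  rw [← integral_complex_ofReal]
  simp_rw [ofReal_div, ofReal_sin_pow_eq_expSum, ofReal_pow]
  rw [integral_expSum_div_pow hk (by simp) hmoment, neg_div, neg_mul, Finset.sum_div,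
    Finset.mul_sum]
  refine congrArg _ (Finset.sum_congr rfl fun l _ ↦ ?_)
  rw [← mul_neg, mul_pow]
  ring

theorem I_div_two_pow_mul_neg_I_pow (k j : ℕ) :
    (I / 2) ^ (k + 2 * j) * (-I) ^ k = (((-1) ^ j / 2 ^ (k + 2 * j) : ℝ) : ℂ) := by
  have hI : I ^ (k + 2 * j) * (-I) ^ k = (-1) ^ j := by
    rw [pow_add, mul_right_comm, ← mul_pow, pow_mul, I_sq, mul_neg, I_mul_I, neg_neg, one_pow,
      one_mul]
  rw [div_pow, div_mul_eq_mul_div, hI]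
  push_cast
  rfl

theorem re_log_ofReal_mul_I (x : ℝ) : (Complex.log (x * I)).re = Real.log |x| := by
  simp [log_re]

theorem integral_sin_pow_div_pow_of_eq_add {n k j : ℕ} (hk : k ≠ 0) (hn : n = k + 2 * (j + 1)) :
    ∫ x in Set.Ioi (0 : ℝ), Real.sin x ^ n / x ^ (k + 1) =
      (-1) ^ j / (2 ^ n * k.factorial) * ∑ l ∈ Finset.range (n + 1),
        (-1) ^ l * n.choose l * ((n : ℝ) - 2 * l) ^ k * Real.log |(n : ℝ) - 2 * l| := by
  have hcoeff : -((I / 2) ^ n * (-I) ^ k / k.factorial) =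
      (((-1) ^ j / (2 ^ n * k.factorial) : ℝ) : ℂ) := by
    rw [hn, I_div_two_pow_mul_neg_I_pow]
    push_cast
    ring
  have hterm : ∀ l : ℕ,
      ((-1) ^ l * n.choose l * ((n : ℂ) - 2 * l) ^ k * Complex.log ((n - 2 * l) * I)).re =
        (-1) ^ l * n.choose l * ((n : ℝ) - 2 * l) ^ k * Real.log |(n : ℝ) - 2 * l| := fun l ↦ by
    rw [← re_log_ofReal_mul_I, ← re_ofReal_mul]
    push_cast
    rfl
  rw [← ofReal_re (∫ x in Set.Ioi (0 : ℝ), _), ofReal_integral_sin_pow_div_pow hk (by omega),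
    hcoeff, re_ofReal_mul, re_sum, Finset.sum_congr rfl fun l _ ↦ hterm l]

end Sine

theorem stmt_3 (n m : ℕ) (hm : 2 ≤ m) (hmn : m < n) (hpar : Odd (n - m)) :
    ∫ x in Set.Ioi (0 : ℝ), Real.sin x ^ n / x ^ m =
      (-1 : ℝ) ^ (((m : ℤ) - n + 1) / 2) / (2 ^ n * (Nat.factorial (m - 1))) *
        ∑ l ∈ (Finset.range (n + 1)).filter (fun l => 2 * l ≠ n),
          (-1 : ℝ) ^ l * (n.choose l : ℝ) * ((n : ℝ) - 2 * l) ^ (m - 1) *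
            Real.log |2 * (l : ℝ) - n| := by
  obtain ⟨j, hj⟩ := hpar
  obtain ⟨k, rfl⟩ : ∃ k, m = k + 1 := ⟨m - 1, by omega⟩
  have hsign : (-1 : ℝ) ^ ((((k + 1 : ℕ) : ℤ) - n + 1) / 2) = (-1) ^ j := by
    rw [show (((k + 1 : ℕ) : ℤ) - n + 1) / 2 = -(j : ℤ) by omega, zpow_neg, ← inv_zpow, inv_neg_one,
      zpow_natCast]
  have hsupport : ∀ l ∈ Finset.range (n + 1), (-1 : ℝ) ^ l * (n.choose l : ℝ) *
      ((n : ℝ) - 2 * l) ^ k * Real.log |2 * (l : ℝ) - n| ≠ 0 → 2 * l ≠ n := by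
    rintro l - hne rfl
    simp at hne
  rw [hsign, Nat.add_sub_cancel, Finset.sum_filter_of_ne hsupport,
    integral_sin_pow_div_pow_of_eq_add (by omega) (by omega : n = k + 2 * (j + 1))]
  simp_rw [abs_sub_comm (n : ℝ)]
end

section
/- Let β > 0 and let φ : ℝ → ℂ be a Schwartz function, and set φ̂(x) = ∫_ℝ φ(k) e^{−ikx} dk. Then the two principal-value limits below exist and lim_{δ→0⁺} ∫_{|x| ≥ δ} φ̂(x)/(e^{βx} − 1) dx = −π·φ(0) + lim_{δ→0⁺} ∫_{|k| ≥ δ} (−iπ/β) · coth(πk/β) · φ(k) dk. (This expresses the distributional identity F[1/(e^{βx}−1)] = (π/(iβ)) coth(πk/β) − π δ(k), both singular integrals taken as principal values.) -/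
open MeasureTheory Real Complex Filter Topology

open Set SchwartzMap FourierTransform

/-!
Write `1 / (e^{βx} - 1) = -1/2 + 1/2 coth (βx/2)`. By Fourier inversion the constant contributes
`-1/2 ∫ φ̂ = -π φ(0)`. A principal value against the odd kernel `coth` is an absolutely convergent
integral over `(0, ∞)` against `φ̂(x) - φ̂(-x)`, so there it remains to compare the expansions
`coth (βx/2) = ∑ₙ e^{-|n|βx}` (geometric series) and
`(π/β) coth (πk/β) = ∑ₙ k / (k² + n²β²)` (Mittag-Leffler series of the cotangent on the imaginary
axis), both over `n ∈ ℤ`. They correspond term by term: the transform of the one-sided exponential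
`e^{-εx}` is `1 / (ε + ik)`, whose odd part in `k` is `-ik / (k² + ε²)`, with `ε = |n|β`. The term
`n = 0` is the limit `ε → 0⁺`, and positivity of all terms justifies integrating termwise.
-/

section PrincipalValue

variable {E : Type*} [NormedAddCommGroup E] [NormedSpace ℝ E] {f g : ℝ → E} {a b : E} {δ : ℝ}

/-- `HasPVIntegral f a`: the symmetric principal value at `0` of the integral of `f` over `ℝ`
exists and equals `a`. Integrability of `f` away from `0` is part of the notion, so that the
truncated integrals are never junk values. -/
structure HasPVIntegral (f : ℝ → E) (a : E) : Prop where
  integrableOn : ∀ δ > 0, IntegrableOn f {x | δ ≤ |x|}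
  tendsto : Tendsto (fun δ : ℝ => ∫ x in {x | δ ≤ |x|}, f x) (𝓝[>] 0) (𝓝 a)

lemma measurableSet_le_abs (δ : ℝ) : MeasurableSet {x : ℝ | δ ≤ |x|} :=
  measurableSet_le measurable_const measurable_norm

lemma setIntegral_le_abs_eq_integral_Ioi (hδ : 0 < δ) (hf : IntegrableOn f {x | δ ≤ |x|}) :
    ∫ x in {x | δ ≤ |x|}, f x = ∫ x in Ioi δ, (f x + f (-x)) := by
  have hunion : {x : ℝ | δ ≤ |x|} = Ici δ ∪ Iic (-δ) := by
    ext x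
    simp [le_abs, le_neg]
  have hdisj : Disjoint (Ici δ) (Iic (-δ)) := Ici_disjoint_Iic.2 (by linarith)
  rw [hunion] at hf ⊢
  have hright : IntegrableOn f (Ici δ) := hf.left_of_union
  have hleft : IntegrableOn f (Iic (-δ)) := hf.right_of_union
  have hleft_neg : IntegrableOn (fun x => f (-x)) (Ioi δ) := by
    have := hleft.comp_neg
    rw [Set.neg_Iic, neg_neg] at this
    exact this.mono_set Ioi_subset_Ici_self
  rw [setIntegral_union hdisj measurableSet_Iic hright hleft,
    integral_add (hright.mono_set Ioi_subset_Ici_self) hleft_neg, integral_Ici_eq_integral_Ioi,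
    integral_comp_neg_Ioi]

lemma integral_eq_integral_Ioi_add_comp_neg (hf : Integrable f) :
    ∫ x, f x = ∫ x in Ioi (0 : ℝ), (f x + f (-x)) := by
  rw [integral_add hf.integrableOn hf.comp_neg.integrableOn, integral_comp_neg_Ioi, neg_zero,
    add_comm, intervalIntegral.integral_Iic_add_Ioi hf.integrableOn hf.integrableOn]

lemma tendsto_setIntegral_Ioi_nhdsGT {c : ℝ} (hf : IntegrableOn f (Ioi c)) :
    Tendsto (fun δ : ℝ => ∫ x in Ioi δ, f x) (𝓝[>] c) (𝓝 (∫ x in Ioi c, f x)) := by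
  have hcover : AECover (volume.restrict (Ioi c)) (𝓝[>] c) fun δ : ℝ => Ioi δ :=
    aecover_Ioi_of_Ioi (tendsto_nhdsWithin_of_tendsto_nhds tendsto_id)
  refine (hcover.integral_tendsto_of_countably_generated hf).congr' ?_
  filter_upwards [self_mem_nhdsWithin] with δ hδ
  rw [Measure.restrict_restrict measurableSet_Ioi, inter_eq_left.2 (Ioi_subset_Ioi (le_of_lt hδ))]

namespace HasPVIntegral

lemma of_integrableOn_add_comp_neg (hf : ∀ δ > 0, IntegrableOn f {x | δ ≤ |x|})
    (hsymm : IntegrableOn (fun x => f x + f (-x)) (Ioi 0)) :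
    HasPVIntegral f (∫ x in Ioi (0 : ℝ), (f x + f (-x))) := by
  refine ⟨hf, (tendsto_setIntegral_Ioi_nhdsGT hsymm).congr' ?_⟩
  filter_upwards [self_mem_nhdsWithin] with δ hδ
  exact (setIntegral_le_abs_eq_integral_Ioi hδ (hf δ hδ)).symm

lemma of_integrable (hf : Integrable f) : HasPVIntegral f (∫ x, f x) := by
  rw [integral_eq_integral_Ioi_add_comp_neg hf]
  exact of_integrableOn_add_comp_neg (fun _ _ => hf.integrableOn)
    (hf.add hf.comp_neg).integrableOn

lemma add (hf : HasPVIntegral f a) (hg : HasPVIntegral g b) :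
    HasPVIntegral (fun x => f x + g x) (a + b) := by
  refine ⟨fun δ hδ => (hf.integrableOn δ hδ).add (hg.integrableOn δ hδ),
    (hf.tendsto.add hg.tendsto).congr' ?_⟩
  filter_upwards [self_mem_nhdsWithin] with δ hδ
  exact (integral_add (hf.integrableOn δ hδ) (hg.integrableOn δ hδ)).symm

lemma const_smul {𝕜 : Type*} [RCLike 𝕜] [NormedSpace 𝕜 E] (hf : HasPVIntegral f a) (c : 𝕜) :
    HasPVIntegral (fun x => c • f x) (c • a) := by
  refine ⟨fun δ hδ => (hf.integrableOn δ hδ).smul c, ?_⟩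
  simpa only [integral_smul] using hf.tendsto.const_smul c

lemma congr (hf : HasPVIntegral f a) (hfg : ∀ x ≠ 0, f x = g x) : HasPVIntegral g a := by
  have heqOn (δ : ℝ) (hδ : 0 < δ) : EqOn f g {x | δ ≤ |x|} := fun x hx =>
    hfg x (abs_pos.1 (hδ.trans_le hx))
  refine ⟨fun δ hδ => (hf.integrableOn δ hδ).congr_fun (heqOn δ hδ) (measurableSet_le_abs δ),
    hf.tendsto.congr' ?_⟩
  filter_upwards [self_mem_nhdsWithin] with δ hδ
  exact setIntegral_congr_fun (measurableSet_le_abs δ) (heqOn δ hδ)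

end HasPVIntegral

end PrincipalValue

section OddDiff

variable {E : Type*} [NormedAddCommGroup E] {ψ : ℝ → E}

/-- Twice the odd part of `ψ`. -/
def oddDiff (ψ : ℝ → E) (x : ℝ) : E := ψ x - ψ (-x)

lemma oddDiff_neg (ψ : ℝ → E) (x : ℝ) : oddDiff ψ (-x) = -oddDiff ψ x := by
  simp [oddDiff]

lemma integrable_oddDiff (hψ : Integrable ψ) : Integrable (oddDiff ψ) :=
  hψ.sub hψ.comp_neg

variable [NormedSpace ℝ E]

/-- Integrable functions whose odd part satisfies Dini's condition at `0`. Against such functions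
kernels with a simple pole at `0` have a principal value, which becomes an absolutely convergent
integral over `(0, ∞)` once the contributions of `x` and `-x` are combined. -/
structure IntegrableDini (ψ : ℝ → E) : Prop where
  integrable : Integrable ψ
  integrableOn_inv_smul_oddDiff : IntegrableOn (fun x : ℝ => x⁻¹ • oddDiff ψ x) (Ioi 0)

lemma isBigO_oddDiff_of_differentiableAt (hψ : DifferentiableAt ℝ ψ 0) :
    oddDiff ψ =O[𝓝 0] (fun x : ℝ => x) := by
  have hodd : DifferentiableAt ℝ (oddDiff ψ) 0 :=
    hψ.sub (DifferentiableAt.comp 0 (by simpa using hψ) differentiable_neg.differentiableAt)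
  have hzero : oddDiff ψ 0 = 0 := by simp [oddDiff]
  simpa only [hzero, sub_zero] using hodd.isBigO_sub

lemma IntegrableDini.of_differentiableAt (hψ : Integrable ψ) (hd : DifferentiableAt ℝ ψ 0) :
    IntegrableDini ψ := by
  refine ⟨hψ, ?_⟩
  have hmeas : AEStronglyMeasurable (fun x : ℝ => x⁻¹ • oddDiff ψ x) :=
    measurable_inv.aestronglyMeasurable.smul (integrable_oddDiff hψ).1
  obtain ⟨C, hC⟩ := (isBigO_oddDiff_of_differentiableAt hd).bound
  obtain ⟨r, hr, hball⟩ := Metric.eventually_nhds_iff.1 hC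
  have hunion : Ioi (0 : ℝ) = Ioo 0 r ∪ Ici r := (Ioo_union_Ici_eq_Ioi hr).symm
  rw [hunion]
  refine IntegrableOn.union ?_ ?_
  · refine (integrableOn_const (C := C) measure_Ioo_lt_top.ne).mono' hmeas.restrict ?_
    filter_upwards [ae_restrict_mem measurableSet_Ioo] with x hx
    have hbound : ‖oddDiff ψ x‖ ≤ C * ‖x‖ := hball (by simpa [abs_of_pos hx.1] using hx.2)
    rw [norm_smul, norm_inv]
    rwa [inv_mul_le_iff₀' (norm_pos_iff.2 hx.1.ne')]
  · refine ((integrable_oddDiff hψ).norm.const_mul r⁻¹).integrableOn.mono' hmeas.restrict ?_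
    filter_upwards [ae_restrict_mem measurableSet_Ici] with x hx
    rw [norm_smul, norm_inv, Real.norm_of_nonneg (hr.le.trans hx)]
    gcongr
    exact hx

end OddDiff

section Coth

/-- The hyperbolic cotangent, with the junk value `coth 0 = 0`. -/
noncomputable def coth (x : ℝ) : ℝ := Real.cosh x / Real.sinh x

lemma coth_neg (x : ℝ) : coth (-x) = -coth x := by
  simp [coth, div_neg]

@[fun_prop]
lemma measurable_coth : Measurable coth :=
  Real.measurable_cosh.div Real.measurable_sinh

lemma coth_eq_exp (x : ℝ) :
    coth x = (1 + Real.exp (-(2 * x))) / (1 - Real.exp (-(2 * x))) := by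
  have hmul : Real.exp x * Real.exp (-(2 * x)) = Real.exp (-x) := by
    rw [← Real.exp_add]
    ring_nf
  rw [coth, Real.cosh_eq, Real.sinh_eq, div_div_div_cancel_right₀ two_ne_zero, ← hmul,
    ← mul_one_add, ← mul_one_sub, mul_div_mul_left _ _ (Real.exp_ne_zero x)]

lemma coth_nonneg {x : ℝ} (hx : 0 ≤ x) : 0 ≤ coth x :=
  div_nonneg (Real.cosh_pos x).le (Real.sinh_nonneg_iff.2 hx)

lemma coth_abs (x : ℝ) : coth |x| = |coth x| := by
  rcases le_total 0 x with hx | hx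
  · rw [abs_of_nonneg hx, abs_of_nonneg (coth_nonneg hx)]
  · have hnonneg : 0 ≤ coth (-x) := coth_nonneg (neg_nonneg.2 hx)
    rw [abs_of_nonpos hx, ← abs_neg (coth x), ← coth_neg, abs_of_nonneg hnonneg]

lemma abs_coth_le (x : ℝ) : |coth x| ≤ 1 + |x|⁻¹ := by
  rcases eq_or_ne x 0 with rfl | hx
  · simp [coth]
  have hpos : 0 < |x| := abs_pos.2 hx
  have hsinh : |x| ≤ Real.sinh |x| := Real.self_le_sinh_iff.2 hpos.le
  have hcosh : Real.cosh |x| ≤ Real.sinh |x| + 1 := by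
    have := Real.cosh_sub_sinh |x|
    have : Real.exp (-|x|) ≤ 1 := Real.exp_le_one_iff.2 (by linarith)
    linarith
  calc |coth x| = Real.cosh |x| / Real.sinh |x| := by rw [← coth_abs, coth]
    _ ≤ (Real.sinh |x| + 1) / Real.sinh |x| := by gcongr
    _ = 1 + (Real.sinh |x|)⁻¹ := by rw [add_div, div_self (hpos.trans_le hsinh).ne', one_div]
    _ ≤ 1 + |x|⁻¹ := by gcongr

lemma inv_exp_sub_one_eq_coth {x : ℝ} (hx : x ≠ 0) :
    (Real.exp x - 1)⁻¹ = -(1 / 2) + 1 / 2 * coth (x / 2) := by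
  have hne : Real.exp x - 1 ≠ 0 := by
    rwa [sub_ne_zero, Ne, Real.exp_eq_one_iff]
  rw [coth_eq_exp, mul_div_cancel₀ x two_ne_zero, Real.exp_neg]
  have : 1 - (Real.exp x)⁻¹ ≠ 0 := by
    rw [← Real.exp_neg, sub_ne_zero, ne_comm, Ne, Real.exp_eq_one_iff, neg_eq_zero]
    exact hx
  field_simp
  ring

lemma hasSum_exp_neg_abs_mul {y : ℝ} (hy : 0 < y) :
    HasSum (fun n : ℤ => Real.exp (-(|(n : ℝ)| * y))) (coth (y / 2)) := by
  set q := Real.exp (-y) with hq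
  have hq1 : q < 1 := Real.exp_lt_one_iff.2 (neg_neg_iff_pos.2 hy)
  have hgeom : HasSum (fun n : ℕ => q * q ^ n) (q * (1 - q)⁻¹) :=
    (hasSum_geometric_of_lt_one (Real.exp_pos _).le hq1).mul_left q
  have hterm (n : ℕ) : Real.exp (-((n + 1) * y)) = q * q ^ n := by
    rw [hq, ← Real.exp_nat_mul, ← Real.exp_add]
    ring_nf
  have habs (n : ℕ) : |(n : ℝ) + 1| = n + 1 := abs_of_nonneg (by positivity)
  have hvalue : coth (y / 2) = q * (1 - q)⁻¹ + 1 + q * (1 - q)⁻¹ := by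
    have : 1 - q ≠ 0 := (sub_pos.2 hq1).ne'
    rw [coth_eq_exp, mul_div_cancel₀ y two_ne_zero, ← hq]
    field_simp
    ring
  rw [hvalue]
  convert! HasSum.of_add_one_of_neg_add_one
    (f := fun n : ℤ => Real.exp (-(|(n : ℝ)| * y))) (m := q * (1 - q)⁻¹) (m' := q * (1 - q)⁻¹)
    ?_ ?_ using 2
  · simp
  · simpa [habs, hterm] using hgeom
  · simpa only [Int.cast_neg, Int.cast_add, Int.cast_natCast, Int.cast_one, abs_neg, habs, hterm]
      using hgeom

lemma cot_ofReal_mul_I (y : ℝ) : Complex.cot (y * I) = -I * coth y := by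
  rw [Complex.cot_eq_cos_div_sin, Complex.cos_mul_I, Complex.sin_mul_I, coth, Complex.ofReal_div,
    Complex.ofReal_cosh, Complex.ofReal_sinh, mul_comm _ I, ← div_div, div_right_comm,
    div_I]
  ring

lemma ofReal_mul_I_mem_integerComplement {y : ℝ} (hy : y ≠ 0) :
    (y * I : ℂ) ∈ integerComplement := by
  rintro ⟨n, hn⟩
  exact hy (by simpa using (congrArg Complex.im hn).symm)

lemma cotTerm_ofReal_mul_I {y : ℝ} (hy : y ≠ 0) (n : ℕ) :
    cotTerm (y * I) n = -I * (2 * (y / (y ^ 2 + (n + 1) ^ 2)) : ℝ) := by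
  have hz := ofReal_mul_I_mem_integerComplement hy
  have hplus : (y * I + (n + 1) : ℂ) ≠ 0 := by
    exact_mod_cast integerComplement_add_ne_zero hz (n + 1)
  have hminus : (y * I - (n + 1) : ℂ) ≠ 0 := by
    simpa [sub_eq_add_neg, add_comm] using integerComplement_add_ne_zero hz (-(n + 1))
  have hfactor : (y ^ 2 + (n + 1) ^ 2 : ℂ) = -((y * I - (n + 1)) * (y * I + (n + 1))) := by
    linear_combination (y : ℂ) ^ 2 * I_sq
  rw [cotTerm]
  push_cast
  rw [hfactor]
  field_simp
  ring

lemma hasSum_div_sq_add_sq_nat {y : ℝ} (hy : y ≠ 0) :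
    HasSum (fun n : ℕ => 2 * (y / (y ^ 2 + (n + 1) ^ 2))) (π * coth (π * y) - 1 / y) := by
  have hz := ofReal_mul_I_mem_integerComplement hy
  have hsum : HasSum (fun n : ℕ => I * cotTerm (y * I) n)
      (I * (π * cot (π * (y * I)) - 1 / (y * I))) := by
    rw [cot_series_rep' hz]
    exact (summable_cotTerm hz).hasSum.mul_left I
  rw [← Complex.hasSum_ofReal]
  convert! hsum using 1
  · ext n
    rw [cotTerm_ofReal_mul_I hy]
    linear_combination ((2 * (y / (y ^ 2 + (n + 1) ^ 2)) : ℝ) : ℂ) * I_sq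
  · rw [← mul_assoc, ← Complex.ofReal_mul, cot_ofReal_mul_I]
    push_cast
    field_simp
    linear_combination (π * coth (π * y) : ℂ) * I_sq

lemma hasSum_div_sq_add_sq {y : ℝ} (hy : y ≠ 0) :
    HasSum (fun n : ℤ => y / (y ^ 2 + (n : ℝ) ^ 2)) (π * coth (π * y)) := by
  have hnat : HasSum (fun n : ℕ => y / (y ^ 2 + (n + 1) ^ 2))
      ((π * coth (π * y) - 1 / y) / 2) := by
    simpa using (hasSum_div_sq_add_sq_nat hy).div_const 2
  convert! HasSum.of_add_one_of_neg_add_one (f := fun n : ℤ => y / (y ^ 2 + (n : ℝ) ^ 2))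
    (by simpa using hnat)
    (by simpa only [Int.cast_neg, Int.cast_add, Int.cast_natCast, Int.cast_one, neg_sq] using hnat)
    using 1
  simp only [Int.cast_zero]
  field_simp
  ring

lemma hasSum_div_sq_add_mul_sq {b y : ℝ} (hb : b ≠ 0) (hy : y ≠ 0) :
    HasSum (fun n : ℤ => y / (y ^ 2 + ((n : ℝ) * b) ^ 2)) (π / b * coth (π / b * y)) := by
  convert! (hasSum_div_sq_add_sq (div_ne_zero hy hb)).mul_left b⁻¹ using 1
  · ext n
    field_simp
  · ring_nf

end Coth

section AngularFourier

variable {E : Type*} [NormedAddCommGroup E] [NormedSpace ℂ E] {φ : ℝ → E}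

/-- The Fourier transform `φ̂(x) = ∫ φ(k) e^{-ikx} dk` in the angular frequency normalisation,
which has no factor `2π` in the exponent and none in front of the integral. -/
noncomputable def angularFourier (φ : ℝ → E) : ℝ → E :=
  VectorFourier.fourierIntegral Real.probChar volume (LinearMap.mul ℝ ℝ) φ

lemma angularFourier_apply (φ : ℝ → E) (x : ℝ) :
    angularFourier φ x = ∫ k : ℝ, Complex.exp (-I * k * x) • φ k := by
  rw [angularFourier, VectorFourier.fourierIntegral_probChar]
  congr! 3 with k
  rw [LinearMap.mul_apply', Complex.ofReal_mul]
  ring_nf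

lemma angularFourier_eq_fourier (φ : ℝ → E) (x : ℝ) :
    angularFourier φ x = 𝓕 φ ((2 * π)⁻¹ * x) := by
  rw [angularFourier_apply, Real.fourier_real_eq_integral_exp_smul]
  congr! 3 with k
  push_cast
  field_simp

lemma integrable_exp_smul (hφ : Integrable φ) (x : ℝ) :
    Integrable fun k : ℝ => Complex.exp (-I * k * x) • φ k :=
  hφ.bdd_smul 1 (by fun_prop) (by simp [Complex.norm_exp])

lemma oddDiff_angularFourier (hφ : Integrable φ) :
    oddDiff (angularFourier φ) = angularFourier (oddDiff φ) := by
  ext x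
  have hneg : angularFourier φ (-x) = ∫ k : ℝ, Complex.exp (-I * k * x) • φ (-k) := by
    rw [angularFourier_apply, ← integral_neg_eq_self]
    simp
  have hφneg := integrable_exp_smul hφ.comp_neg x
  rw [oddDiff, hneg, angularFourier_apply, angularFourier_apply,
    ← integral_sub (integrable_exp_smul hφ x) hφneg]
  simp only [oddDiff, smul_sub]

variable [CompleteSpace E]

lemma integral_smul_angularFourier {g : ℝ → ℂ} (hg : Integrable g) (hφ : Integrable φ) :
    ∫ x, g x • angularFourier φ x = ∫ k, angularFourier g k • φ k := by
  have hflip : (LinearMap.mul ℝ ℝ).flip = LinearMap.mul ℝ ℝ := by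
    ext
    simp
  have hself := VectorFourier.integral_fourierIntegral_smul_eq_flip (L := LinearMap.mul ℝ ℝ)
    Real.continuous_probChar continuous_mul hg hφ
  rw [hflip] at hself
  exact hself.symm

lemma integral_angularFourier (hφ : Integrable φ) (hφ' : Integrable (angularFourier φ))
    (hcont : ContinuousAt φ 0) : ∫ x, angularFourier φ x = (2 * π : ℝ) • φ 0 := by
  have hpi : (2 * π)⁻¹ ≠ 0 := by positivity
  simp_rw [funext (angularFourier_eq_fourier φ)] at hφ' ⊢
  have hfourier : Integrable (𝓕 φ) := (integrable_comp_mul_left_iff (𝓕 φ) hpi).1 hφ'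
  have hinv : ∫ ξ, 𝓕 φ ξ = φ 0 := by
    rw [← hφ.fourierInv_fourier_eq hfourier hcont, Real.fourierInv_eq']
    simp
  rw [Measure.integral_comp_mul_left, hinv, inv_inv, abs_of_pos (by positivity)]

end AngularFourier

section OneSidedExponential

variable {ε : ℝ}

lemma angularFourier_indicator_exp (hε : 0 < ε) (k : ℝ) :
    angularFourier ((Ioi 0).indicator fun x : ℝ => (Real.exp (-(ε * x)) : ℂ)) k =
      (ε + k * I)⁻¹ := by
  have hre : (-(ε + k * I)).re < 0 := by simpa using hε
  have hexp (x : ℝ) : Complex.exp (-I * x * k) • (Real.exp (-(ε * x)) : ℂ) =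
      Complex.exp (-(ε + k * I) * x) := by
    rw [smul_eq_mul, Complex.ofReal_exp, ← Complex.exp_add]
    push_cast
    ring_nf
  have hind (x : ℝ) : Complex.exp (-I * x * k) •
      (Ioi 0).indicator (fun x : ℝ => (Real.exp (-(ε * x)) : ℂ)) x =
        (Ioi 0).indicator (fun x : ℝ => Complex.exp (-(ε + k * I) * x)) x := by
    by_cases hx : x ∈ Ioi (0 : ℝ)
    · simp only [indicator_of_mem hx, hexp]
    · simp only [indicator_of_notMem hx, smul_zero]
  rw [angularFourier_apply]
  simp only [hind]
  rw [integral_indicator measurableSet_Ioi, integral_exp_mul_complex_Ioi hre,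
    Complex.ofReal_zero, mul_zero, Complex.exp_zero, neg_div_neg_eq, one_div]

lemma ofReal_add_ofReal_mul_I_ne_zero (hε : ε ≠ 0) (k : ℝ) : (ε + k * I : ℂ) ≠ 0 :=
  fun h => hε (by simpa using congrArg re h)

lemma norm_inv_ofReal_add_ofReal_mul_I_le (hε : 0 < ε) (k : ℝ) :
    ‖(ε + k * I : ℂ)⁻¹‖ ≤ ε⁻¹ := by
  rw [norm_inv]
  gcongr
  simpa using (le_abs_self _).trans (Complex.abs_re_le_norm (ε + k * I))

lemma inv_sub_inv_neg_eq (hε : ε ≠ 0) (k : ℝ) :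
    (ε + k * I : ℂ)⁻¹ - (ε + (-k : ℝ) * I)⁻¹ = -2 * I * (k / (k ^ 2 + ε ^ 2) : ℝ) := by
  have hpos := ofReal_add_ofReal_mul_I_ne_zero hε k
  have hneg := ofReal_add_ofReal_mul_I_ne_zero hε (-k)
  have hfactor : (k ^ 2 + ε ^ 2 : ℂ) = (ε + k * I) * (ε + (-k : ℝ) * I) := by
    push_cast
    linear_combination (k : ℂ) ^ 2 * I_sq
  rw [inv_sub_inv hpos hneg, ← hfactor]
  push_cast
  ring

variable {E : Type*} [NormedAddCommGroup E] [NormedSpace ℂ E] [CompleteSpace E] {φ : ℝ → E}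

lemma integral_exp_smul_angularFourier (hε : 0 < ε) (hφ : Integrable φ) :
    ∫ x in Ioi (0 : ℝ), Real.exp (-(ε * x)) • angularFourier φ x =
      ∫ k : ℝ, (ε + k * I : ℂ)⁻¹ • φ k := by
  have hexp : Integrable ((Ioi 0).indicator fun x : ℝ => (Real.exp (-(ε * x)) : ℂ)) := by
    have hreal : IntegrableOn (fun x : ℝ => Real.exp (-(ε * x))) (Ioi 0) := by
      simpa only [neg_mul] using integrableOn_exp_mul_Ioi (neg_neg_iff_pos.2 hε) 0
    exact (integrable_indicator_iff measurableSet_Ioi).2 hreal.ofReal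
  have hpair := integral_smul_angularFourier hexp hφ
  simp only [angularFourier_indicator_exp hε, ← indicator_smul_apply_left,
    Complex.coe_smul] at hpair
  rwa [integral_indicator measurableSet_Ioi] at hpair

lemma integral_exp_smul_oddDiff_angularFourier_of_pos (hε : 0 < ε) (hφ : Integrable φ) :
    ∫ x in Ioi (0 : ℝ), Real.exp (-(ε * x)) • oddDiff (angularFourier φ) x =
      (-2 * I) • ∫ k in Ioi (0 : ℝ), (k / (k ^ 2 + ε ^ 2)) • oddDiff φ k := by
  have hint : Integrable fun k : ℝ => (ε + k * I : ℂ)⁻¹ • oddDiff φ k :=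
    (integrable_oddDiff hφ).bdd_smul ε⁻¹ (by fun_prop)
      (.of_forall (norm_inv_ofReal_add_ofReal_mul_I_le hε))
  rw [oddDiff_angularFourier hφ, integral_exp_smul_angularFourier hε (integrable_oddDiff hφ),
    integral_eq_integral_Ioi_add_comp_neg hint, ← integral_smul]
  congr with k
  rw [oddDiff_neg, smul_neg, ← sub_eq_add_neg, ← sub_smul, inv_sub_inv_neg_eq hε.ne', mul_smul,
    Complex.coe_smul]

end OneSidedExponential

section KernelLimits

variable {α E : Type*} [MeasurableSpace α] {μ : Measure α} [NormedAddCommGroup E]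
  [NormedSpace ℝ E]

lemma tendsto_integral_smul_of_abs_le_one {ι : Type*} {l : Filter ι} [l.IsCountablyGenerated]
    {m : ι → α → ℝ} {g : α → E} (hg : Integrable g μ) (hm : ∀ i, Measurable (m i))
    (hle : ∀ᶠ i in l, ∀ᵐ x ∂μ, |m i x| ≤ 1) (hlim : ∀ᵐ x ∂μ, Tendsto (m · x) l (𝓝 1)) :
    Tendsto (fun i => ∫ x, m i x • g x ∂μ) l (𝓝 (∫ x, g x ∂μ)) := by
  refine tendsto_integral_filter_of_dominated_convergence (fun x => ‖g x‖)
    (.of_forall fun i => (hm i).aestronglyMeasurable.smul hg.1) ?_ hg.norm ?_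
  · filter_upwards [hle] with i hi
    filter_upwards [hi] with x hx
    rw [norm_smul]
    exact mul_le_of_le_one_left (norm_nonneg _) hx
  · filter_upwards [hlim] with x hx
    simpa only [one_smul] using hx.smul_const (g x)

lemma hasSum_integral_smul_of_nonneg {ι : Type*} [Countable ι] {m : ι → α → ℝ} {s : α → ℝ}
    {g : α → E} (hg : AEStronglyMeasurable g μ) (hm : ∀ i, Measurable (m i))
    (hnonneg : ∀ i, 0 ≤ᵐ[μ] m i) (hsum : ∀ᵐ x ∂μ, HasSum (m · x) (s x))
    (hint : Integrable (fun x => s x • g x) μ) :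
    HasSum (fun i => ∫ x, m i x • g x ∂μ) (∫ x, s x • g x ∂μ) := by
  refine hasSum_integral_of_dominated_convergence (fun i x => m i x * ‖g x‖)
    (fun i => (hm i).aestronglyMeasurable.smul hg) (fun i => ?_) ?_ ?_ ?_
  · filter_upwards [hnonneg i] with x hx
    rw [norm_smul, Real.norm_of_nonneg hx]
  · filter_upwards [hsum] with x hx
    exact hx.summable.mul_right _
  · refine hint.norm.congr ?_
    filter_upwards [hsum, ae_all_iff.2 hnonneg] with x hx hpos
    rw [norm_smul, Real.norm_of_nonneg (hx.nonneg hpos), tsum_mul_right, hx.tsum_eq]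
  · filter_upwards [hsum] with x hx
    exact hx.smul_const _

end KernelLimits

section CothPairing

variable {E : Type*} [NormedAddCommGroup E]

section Real

variable [NormedSpace ℝ E] {ψ : ℝ → E}

lemma IntegrableDini.integrableOn_coth_smul_oddDiff (hψ : IntegrableDini ψ) (b : ℝ) :
    IntegrableOn (fun x => coth (b * x) • oddDiff ψ x) (Ioi 0) := by
  have hodd := integrable_oddDiff hψ.integrable
  have hmeas : AEStronglyMeasurable (fun x => coth (b * x) • oddDiff ψ x) :=
    (show Measurable fun x => coth (b * x) by fun_prop).aestronglyMeasurable.smul hodd.1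
  refine (hodd.norm.integrableOn.add
    (hψ.integrableOn_inv_smul_oddDiff.norm.const_mul |b|⁻¹)).mono' hmeas.restrict ?_
  refine .of_forall fun x => ?_
  calc ‖coth (b * x) • oddDiff ψ x‖ ≤ (1 + |b * x|⁻¹) * ‖oddDiff ψ x‖ := by
        rw [norm_smul]
        gcongr
        exact abs_coth_le _
    _ = ‖oddDiff ψ x‖ + |b|⁻¹ * ‖x⁻¹ • oddDiff ψ x‖ := by
        rw [norm_smul, norm_inv, Real.norm_eq_abs, abs_mul, mul_inv]
        ring

lemma integrableOn_coth_smul (hψ : Integrable ψ) (b : ℝ) {δ : ℝ} (hδ : 0 < δ) :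
    IntegrableOn (fun x => coth (b * x) • ψ x) {x | δ ≤ |x|} := by
  refine Integrable.bdd_smul hψ.integrableOn (1 + (|b| * δ)⁻¹)
    (show Measurable fun x => coth (b * x) by fun_prop).aestronglyMeasurable ?_
  filter_upwards [ae_restrict_mem (measurableSet_le_abs δ)] with x hx
  calc |coth (b * x)| ≤ 1 + |b|⁻¹ * |x|⁻¹ := by
        rw [← mul_inv, ← abs_mul]
        exact abs_coth_le _
    _ ≤ 1 + |b|⁻¹ * δ⁻¹ := by
        gcongr
    _ = 1 + (|b| * δ)⁻¹ := by rw [mul_inv]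

lemma IntegrableDini.hasPVIntegral_coth_smul (hψ : IntegrableDini ψ) (b : ℝ) :
    HasPVIntegral (fun x => coth (b * x) • ψ x)
      (∫ x in Ioi (0 : ℝ), coth (b * x) • oddDiff ψ x) := by
  have hfold (x : ℝ) : coth (b * x) • ψ x + coth (b * -x) • ψ (-x) =
      coth (b * x) • oddDiff ψ x := by
    rw [oddDiff, mul_neg, coth_neg, neg_smul, smul_sub, sub_eq_add_neg]
  have hpv := HasPVIntegral.of_integrableOn_add_comp_neg
    (fun δ hδ => integrableOn_coth_smul hψ.integrable b hδ)
    (by simpa only [hfold] using hψ.integrableOn_coth_smul_oddDiff b)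
  simpa only [hfold] using hpv

end Real

variable [NormedSpace ℂ E] [CompleteSpace E] {φ : ℝ → E}

lemma integral_Ioi_oddDiff_angularFourier (hφ : IntegrableDini φ)
    (hφ' : Integrable (angularFourier φ)) :
    ∫ x in Ioi (0 : ℝ), oddDiff (angularFourier φ) x =
      (-2 * I) • ∫ k in Ioi (0 : ℝ), k⁻¹ • oddDiff φ k := by
  have hexp : Tendsto
      (fun ε : ℝ => ∫ x in Ioi (0 : ℝ), Real.exp (-(ε * x)) • oddDiff (angularFourier φ) x)
      (𝓝[>] 0) (𝓝 (∫ x in Ioi (0 : ℝ), oddDiff (angularFourier φ) x)) := by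
    refine tendsto_integral_smul_of_abs_le_one (integrable_oddDiff hφ').integrableOn
      (fun ε => by fun_prop) ?_ (.of_forall fun x => ?_)
    · filter_upwards [self_mem_nhdsWithin] with ε hε
      filter_upwards [ae_restrict_mem measurableSet_Ioi] with x hx
      rw [Real.abs_exp, Real.exp_le_one_iff, neg_nonpos]
      exact mul_nonneg (le_of_lt hε) (le_of_lt hx)
    · exact tendsto_nhdsWithin_of_tendsto_nhds (Continuous.tendsto' (by fun_prop) _ _ (by simp))
  have hpoisson : Tendsto
      (fun ε : ℝ => ∫ k in Ioi (0 : ℝ), (k ^ 2 / (k ^ 2 + ε ^ 2)) • k⁻¹ • oddDiff φ k)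
      (𝓝[>] 0) (𝓝 (∫ k in Ioi (0 : ℝ), k⁻¹ • oddDiff φ k)) := by
    refine tendsto_integral_smul_of_abs_le_one hφ.integrableOn_inv_smul_oddDiff
      (fun ε => by fun_prop) (.of_forall fun ε => .of_forall fun k => ?_) ?_
    · rw [abs_of_nonneg (by positivity)]
      exact div_le_one_of_le₀ (by linarith [sq_nonneg ε]) (by positivity)
    · filter_upwards [ae_restrict_mem measurableSet_Ioi] with k (hk : 0 < k)
      have hdenom (ε : ℝ) : k ^ 2 + ε ^ 2 ≠ 0 := by positivity
      refine tendsto_nhdsWithin_of_tendsto_nhds (Continuous.tendsto' ?_ _ _ ?_)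
      · fun_prop (disch := exact hdenom _)
      · simp [hk.ne']
  refine tendsto_nhds_unique hexp ((hpoisson.const_smul (-2 * I)).congr' ?_)
  filter_upwards [self_mem_nhdsWithin] with ε hε
  rw [integral_exp_smul_oddDiff_angularFourier_of_pos hε hφ.integrable]
  congr! 3 with k
  rw [smul_smul]
  congr 1
  rcases eq_or_ne k 0 with rfl | hk <;> field_simp

lemma integral_exp_smul_oddDiff_angularFourier {ε : ℝ} (hε : 0 ≤ ε) (hφ : IntegrableDini φ)
    (hφ' : Integrable (angularFourier φ)) :
    ∫ x in Ioi (0 : ℝ), Real.exp (-(ε * x)) • oddDiff (angularFourier φ) x =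
      (-2 * I) • ∫ k in Ioi (0 : ℝ), (k / (k ^ 2 + ε ^ 2)) • oddDiff φ k := by
  rcases hε.eq_or_lt with rfl | hpos
  · have hinv (k : ℝ) : k / (k ^ 2 + 0 ^ 2) = k⁻¹ := by
      rw [zero_pow two_ne_zero, add_zero, sq, div_self_mul_self']
    simp only [hinv, zero_mul, neg_zero, Real.exp_zero, one_smul]
    exact integral_Ioi_oddDiff_angularFourier hφ hφ'
  · exact integral_exp_smul_oddDiff_angularFourier_of_pos hpos hφ.integrable

lemma integral_coth_smul_oddDiff_angularFourier {β : ℝ} (hβ : 0 < β)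
    (hφ : IntegrableDini φ) (hφ' : IntegrableDini (angularFourier φ)) :
    ∫ x in Ioi (0 : ℝ), coth (β / 2 * x) • oddDiff (angularFourier φ) x =
      (-2 * I * π / β) • ∫ k in Ioi (0 : ℝ), coth (π / β * k) • oddDiff φ k := by
  have hexp : HasSum (fun n : ℤ => ∫ x in Ioi (0 : ℝ),
      Real.exp (-(|(n : ℝ)| * β * x)) • oddDiff (angularFourier φ) x)
      (∫ x in Ioi (0 : ℝ), coth (β / 2 * x) • oddDiff (angularFourier φ) x) := by
    refine hasSum_integral_smul_of_nonneg (integrable_oddDiff hφ'.integrable).1.restrict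
      (fun n => by fun_prop) (fun n => .of_forall fun x => (Real.exp_pos _).le) ?_
      (hφ'.integrableOn_coth_smul_oddDiff _)
    filter_upwards [ae_restrict_mem measurableSet_Ioi] with x hx
    simpa only [mul_assoc, mul_div_right_comm] using hasSum_exp_neg_abs_mul (mul_pos hβ hx)
  have hpoisson : HasSum (fun n : ℤ => ∫ k in Ioi (0 : ℝ),
      (k / (k ^ 2 + (|(n : ℝ)| * β) ^ 2)) • oddDiff φ k)
      (∫ k in Ioi (0 : ℝ), (π / β * coth (π / β * k)) • oddDiff φ k) := by
    refine hasSum_integral_smul_of_nonneg (integrable_oddDiff hφ.integrable).1.restrict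
      (fun n => by fun_prop) (fun n => ?_) ?_ ?_
    · filter_upwards [ae_restrict_mem measurableSet_Ioi] with k (hk : 0 < k)
      simp only [Pi.zero_apply]
      positivity
    · filter_upwards [ae_restrict_mem measurableSet_Ioi] with k hk
      simpa only [mul_pow, sq_abs] using hasSum_div_sq_add_mul_sq hβ.ne' (ne_of_gt hk)
    · simp only [mul_smul]
      exact (hφ.integrableOn_coth_smul_oddDiff (π / β)).smul (π / β)
  have hterm (n : ℤ) := integral_exp_smul_oddDiff_angularFourier
    (ε := |(n : ℝ)| * β) (by positivity) hφ hφ'.integrable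
  simp only [hterm] at hexp
  rw [hexp.unique (hpoisson.const_smul (-2 * I))]
  simp only [mul_smul, integral_smul, ← Complex.coe_smul (π / β)]
  rw [smul_smul, smul_smul]
  push_cast
  ring_nf

end CothPairing

section BoseEinstein

variable {E : Type*} [NormedAddCommGroup E] [NormedSpace ℂ E] {β : ℝ} {φ : ℝ → E}

lemma IntegrableDini.hasPVIntegral_inv_exp_sub_one_smul (hφ : IntegrableDini φ) (hβ : β ≠ 0) :
    HasPVIntegral (fun x => (Real.exp (β * x) - 1)⁻¹ • φ x)
      (-(1 / 2 : ℝ) • (∫ x, φ x) +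
        (1 / 2 : ℝ) • ∫ x in Ioi (0 : ℝ), coth (β / 2 * x) • oddDiff φ x) := by
  refine (((HasPVIntegral.of_integrable hφ.integrable).const_smul _).add
    ((hφ.hasPVIntegral_coth_smul (β / 2)).const_smul _)).congr fun x hx => ?_
  rw [inv_exp_sub_one_eq_coth (mul_ne_zero hβ hx), smul_smul, ← add_smul, mul_div_right_comm]

theorem stmt_9_general [CompleteSpace E] (hβ : 0 < β) (hφ : IntegrableDini φ)
    (hφ' : IntegrableDini (angularFourier φ)) (hcont : ContinuousAt φ 0) :
    ∃ B : E,
      HasPVIntegral (fun x => (Real.exp (β * x) - 1)⁻¹ • angularFourier φ x) (-π • φ 0 + B) ∧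
      HasPVIntegral (fun k => (-I * π / β) • coth (π / β * k) • φ k) B := by
  refine ⟨_, ?_, (hφ.hasPVIntegral_coth_smul (π / β)).const_smul (-I * π / β)⟩
  convert! hφ'.hasPVIntegral_inv_exp_sub_one_smul hβ.ne' using 2
  · rw [integral_angularFourier hφ.integrable hφ'.integrable hcont, smul_smul]
    ring_nf
  · rw [integral_coth_smul_oddDiff_angularFourier hβ hφ hφ', ← Complex.coe_smul, smul_smul]
    push_cast
    ring_nf

end BoseEinstein

section Schwartz

variable {E : Type*} [NormedAddCommGroup E]

lemma IntegrableDini.of_schwartzMap [NormedSpace ℝ E] (φ : 𝓢(ℝ, E)) : IntegrableDini φ :=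
  .of_differentiableAt φ.integrable φ.differentiableAt

lemma exists_schwartzMap_eq_angularFourier [NormedSpace ℂ E] (φ : 𝓢(ℝ, E)) :
    ∃ Φ : 𝓢(ℝ, E), Φ = angularFourier φ := by
  have hpi : ((2 * π)⁻¹ : ℝ) ≠ 0 := by positivity
  refine ⟨SchwartzMap.compCLMOfContinuousLinearEquiv ℂ
    (ContinuousLinearEquiv.unitsEquivAut ℝ (Units.mk0 _ hpi)) (𝓕 φ), funext fun x => ?_⟩
  simp [angularFourier_eq_fourier, fourier_coe, mul_comm]

end Schwartz

theorem stmt_9 (β : ℝ) (hβ : 0 < β) (φ : SchwartzMap ℝ ℂ) :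
    ∃ A B : ℂ,
      Filter.Tendsto
        (fun δ : ℝ => ∫ x in {x : ℝ | δ ≤ |x|},
          (∫ k : ℝ, φ k * Complex.exp (-Complex.I * k * x)) / (Real.exp (β * x) - 1))
        (nhdsWithin 0 (Set.Ioi 0)) (nhds A) ∧
      Filter.Tendsto
        (fun δ : ℝ => ∫ k in {k : ℝ | δ ≤ |k|},
          (-Complex.I * Real.pi / β) *
            (Real.cosh (Real.pi * k / β) / Real.sinh (Real.pi * k / β)) * φ k)
        (nhdsWithin 0 (Set.Ioi 0)) (nhds B) ∧
      A = -Real.pi * φ 0 + B := by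
  obtain ⟨Φ, hΦ⟩ := exists_schwartzMap_eq_angularFourier φ
  obtain ⟨B, hA, hB⟩ := stmt_9_general hβ (.of_schwartzMap φ)
    (hΦ ▸ .of_schwartzMap Φ) φ.continuous.continuousAt
  refine ⟨-π * φ 0 + B, B, ?_, ?_, rfl⟩
  · simpa [angularFourier_apply, div_eq_inv_mul, mul_comm] using hA.tendsto
  · simpa [coth, mul_div_right_comm, mul_assoc] using hB.tendsto
end
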